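/- Let d ≥ 1 and r ≥ 0, and let T be the shifted tableau of shape Z(d,r) with T(i,c) = r − c for c < 0 and T(i,c) = c for c ≥ 0. For every i ∈ {1, …, d}, the concatenation T_d T_{d−1} ⋯ T_{d−i+1} of the bottom i rows of T (each row read left to right), viewed as a word in the letters {0, …, d+r−1}, is a reduced word of the signed permutation u^{(i)} ∈ W(B_{d+r}) with one-line notation (i+1, i+2, …, r+i, −1, −2, …, −i, r+i+1, …, r+d). -/

import Mathlib

open scoped BigOperators

namespace BST

/-- `lam` (1-indexed, with `d` parts) is a strict partition: strictly decreasing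
positive parts `lam 1 > lam 2 > ⋯ > lam d > 0`. -/
def IsStrictPartition (d : ℕ) (lam : ℕ → ℕ) : Prop :=
  (∀ i : ℕ, 1 ≤ i → i < d → lam (i + 1) < lam i) ∧ 1 ≤ lam d

/-- The size `|λ| = λ_1 + ⋯ + λ_d`. -/
def sizeP (d : ℕ) (lam : ℕ → ℕ) : ℕ := ∑ i ∈ Finset.Icc 1 d, lam i

/-- The shifted diagram `D(λ) ⊆ ℤ × ℤ`: row `i` (1 ≤ i ≤ d) occupies columns
`i - d, …, λ_i + i - d - 1`. -/
def Diagram (d : ℕ) (lam : ℕ → ℕ) : Set (ℤ × ℤ) :=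
  {p : ℤ × ℤ | 1 ≤ p.1 ∧ p.1 ≤ (d : ℤ) ∧ p.1 - (d : ℤ) ≤ p.2 ∧
    p.2 + (d : ℤ) + 1 ≤ (lam p.1.toNat : ℤ) + p.1}

/-- The hook `H(i,c)`. -/
def Hook (d : ℕ) (lam : ℕ → ℕ) (i c : ℤ) : Set (ℤ × ℤ) :=
  {(i, c)} ∪ {p ∈ Diagram d lam | (p.1 = i ∧ c < p.2) ∨ (p.2 = c ∧ i < p.1)} ∪
    {p ∈ Diagram d lam | c < 0 ∧ p.1 = (d : ℤ) + 1 + c}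

/-- The extended hook `H̃(i,c)`. -/
def ExtHook (d : ℕ) (lam : ℕ → ℕ) (i c : ℤ) : Set (ℤ × ℤ) :=
  Hook d lam i c ∪ {p : ℤ × ℤ | c < 0 ∧ p = ((d : ℤ) + 1 + c, c)}

/-- The extended diagram `D(λ) ∪ {(i, i - d - 1) : 1 ≤ i ≤ d}`. -/
def ExtDiagram (d : ℕ) (lam : ℕ → ℕ) : Set (ℤ × ℤ) :=
  Diagram d lam ∪ {p : ℤ × ℤ | 1 ≤ p.1 ∧ p.1 ≤ (d : ℤ) ∧ p.2 = p.1 - ((d : ℤ) + 1)}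

/-- The extended filling `B̃`, with `B̃(i, i - d - 1) = B(i, 0)`. -/
def ExtFilling (d : ℕ) (B : ℤ × ℤ → ℕ) : ℤ × ℤ → ℕ :=
  fun p => if p.2 = p.1 - ((d : ℤ) + 1) then B (p.1, 0) else B p

/-- The rank function `rk(i,c)`. -/
def rk (d : ℕ) (lam : ℕ → ℕ) (i c : ℤ) : ℤ :=
  if 0 ≤ c then (lam i.toNat : ℤ) - d + i - c
  else (lam i.toNat : ℤ) - d + i + (lam ((d : ℤ) + 1 + c).toNat : ℤ) + c + 1

/-- A bijective filling of `D(λ)` with `1, …, |λ|` (normalized to be `0` off the diagram). -/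
def IsFilling (d : ℕ) (lam : ℕ → ℕ) (B : ℤ × ℤ → ℕ) : Prop :=
  Set.BijOn B (Diagram d lam) (Set.Icc 1 (sizeP d lam)) ∧
    ∀ p : ℤ × ℤ, p ∉ Diagram d lam → B p = 0

/-- A balanced shifted tableau: a bijective filling such that at each box `(i,c)`,
`B(i,c)` is the `rk(i,c)`-th largest entry of the multiset of values of `B̃` on the
extended hook, i.e. exactly `rk(i,c) - 1` boxes of the extended hook carry a value
strictly larger than `B(i,c)`. -/
def IsBalanced (d : ℕ) (lam : ℕ → ℕ) (B : ℤ × ℤ → ℕ) : Prop :=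
  IsFilling d lam B ∧ ∀ p ∈ Diagram d lam,
    ({q ∈ ExtHook d lam p.1 p.2 | B p < ExtFilling d B q}.ncard : ℤ) =
      rk d lam p.1 p.2 - 1

/-- A standard Young tableau of shifted shape `λ`. -/
def IsSYT (d : ℕ) (lam : ℕ → ℕ) (B : ℤ × ℤ → ℕ) : Prop :=
  IsFilling d lam B ∧ ∀ p ∈ Diagram d lam, ∀ q ∈ Diagram d lam,
    ((p.1 = q.1 ∧ p.2 < q.2) → B p < B q) ∧ ((p.2 = q.2 ∧ p.1 < q.1) → B p < B q)

/-- The simple reflections of `W(B_n)`, acting on `ℤ`: `s 0` swaps `1 ↔ -1`,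
and `s a` (for `a ≥ 1`) swaps `a ↔ a+1` and `-a ↔ -(a+1)`. -/
def sB (a : ℕ) : Equiv.Perm ℤ :=
  if a = 0 then Equiv.swap 1 (-1)
  else Equiv.swap (a : ℤ) ((a : ℤ) + 1) * Equiv.swap (-(a : ℤ)) (-(a : ℤ) - 1)

/-- The product `s_{a_1} s_{a_2} ⋯ s_{a_m}` of a word. -/
def wordProd (L : List ℕ) : Equiv.Perm ℤ := (L.map sB).prod

/-- A signed permutation in `W(B_n)`: odd, and the identity beyond `n`. -/
def IsSignedPerm (n : ℕ) (w : Equiv.Perm ℤ) : Prop :=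
  (∀ i : ℤ, w (-i) = -(w i)) ∧ ∀ i : ℤ, (n : ℤ) < |i| → w i = i

/-- The Coxeter length of `w` in `W(B_n)`. -/
noncomputable def lengthB (n : ℕ) (w : Equiv.Perm ℤ) : ℕ :=
  sInf {m : ℕ | ∃ L : List ℕ, (∀ a ∈ L, a < n) ∧ wordProd L = w ∧ L.length = m}

/-- `L` is a reduced word of `w` in `W(B_n)`. -/
def IsReducedWord (n : ℕ) (w : Equiv.Perm ℤ) (L : List ℕ) : Prop :=
  (∀ a ∈ L, a < n) ∧ wordProd L = w ∧ L.length = lengthB n w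

/-- The vector `e_k` (for `k ≥ 1` the `k`-th standard basis vector, with the
conventions `e 0 = 0` and `e (-k) = - e k`), represented as an odd function `ℤ → ℤ`. -/
def eVec (k : ℤ) : ℤ → ℤ :=
  fun t => if t = 0 then 0 else if t = k then 1 else if t = -k then -1 else 0

/-- The positive roots of type `B_n`. -/
def PosRoots (n : ℕ) : Set (ℤ → ℤ) :=
  {v | (∃ i j : ℤ, 1 ≤ i ∧ i < j ∧ j ≤ (n : ℤ) ∧
        (v = eVec j - eVec i ∨ v = eVec j + eVec i)) ∨
       (∃ i : ℤ, 1 ≤ i ∧ i ≤ (n : ℤ) ∧ v = eVec i)}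

/-- The action of a signed permutation on vectors: `w · e_i = e_{w(i)}`. -/
def actB (w : Equiv.Perm ℤ) (v : ℤ → ℤ) : ℤ → ℤ := fun t => v (w⁻¹ t)

/-- The inversion set `Inv(w) = {α ∈ Φ⁺ : w⁻¹ · α ∈ -Φ⁺}`. -/
def InvSet (n : ℕ) (w : Equiv.Perm ℤ) : Set (ℤ → ℤ) :=
  {α | α ∈ PosRoots n ∧ -(actB w⁻¹ α) ∈ PosRoots n}

/-- The simple roots: `α_0 = e_1` and `α_a = e_{a+1} - e_a` for `a ≥ 1`. -/
def alphaRoot (a : ℕ) : ℤ → ℤ :=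
  if a = 0 then eVec 1 else eVec ((a : ℤ) + 1) - eVec (a : ℤ)

/-- The reflection order of a word: `reflOrder L t = γ_{t+1} = s_{a_1} ⋯ s_{a_t} · α_{a_{t+1}}`
(0-indexed). -/
def reflOrder (L : List ℕ) (t : ℕ) : ℤ → ℤ :=
  actB (wordProd (L.take t)) (alphaRoot (L.getD t 0))

/-- The trapezoid `Z(d,r) = (r+2d-1, r+2d-3, …, r+1)`. -/
def Zlam (d r : ℕ) : ℕ → ℕ := fun i => r + 2 * d + 1 - 2 * i

/-- The labeling `f : D(Z(d,r)) → Φ⁺`. -/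
def fLabel (d r : ℕ) (p : ℤ × ℤ) : ℤ → ℤ :=
  if p.2 ≤ 0 then eVec ((d : ℤ) + 1 - p.1) - eVec p.2
  else if p.2 ≤ (r : ℤ) then eVec ((d : ℤ) + 1 - p.1) + eVec (p.2 + (d : ℤ))
  else eVec ((d : ℤ) + 1 - p.1) - eVec (p.2 - (r : ℤ))

/-- The extended labeling `f̃`, with `f̃(i, i - d - 1) = 2 e_{d+1-i}`. -/
def fExtLabel (d r : ℕ) (p : ℤ × ℤ) : ℤ → ℤ :=
  if p.2 = p.1 - ((d : ℤ) + 1) then (2 : ℤ) • eVec ((d : ℤ) + 1 - p.1)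
  else fLabel d r p

/-- `w` is the signed permutation `w^{(d,r)} ∈ W(B_{d+r})`, i.e.
`w(i) = d + i` for `1 ≤ i ≤ r` and `w(i) = -(i - r)` for `r < i ≤ d + r`. -/
def IsWdr (d r : ℕ) (w : Equiv.Perm ℤ) : Prop :=
  IsSignedPerm (d + r) w ∧
    (∀ i : ℤ, 1 ≤ i → i ≤ (r : ℤ) → w i = (d : ℤ) + i) ∧
    (∀ i : ℤ, (r : ℤ) < i → i ≤ (d : ℤ) + (r : ℤ) → w i = -(i - r))


/-- `x` lies strictly between `y` and `z` (i.e. `min(y,z) < x < max(y,z)`). -/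
def Between (x y z : ℕ) : Prop := (y < x ∧ x < z) ∨ (z < x ∧ x < y)

/-- A nonempty list is unimodal: strictly decreasing down to its minimum
(at 0-indexed position `k`), then strictly increasing. -/
def Unimodal (L : List ℕ) : Prop :=
  ∃ k : ℕ, k < L.length ∧
    (∀ a b : ℕ, a < b → b ≤ k → L.getD b 0 < L.getD a 0) ∧
    (∀ a b : ℕ, k ≤ a → a < b → b < L.length → L.getD a 0 < L.getD b 0)

/-- Row `i` of the distinguished tableau of shape `Z(d,r)`:
`(r+d-i, …, r+1, 0, 1, …, r+d-i)`. -/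
def rowWord (d r i : ℕ) : List ℕ :=
  (List.range (r + 2 * (d - i) + 1)).map fun t =>
    if t < d - i then r + (d - i) - t else t - (d - i)

/-- The reading word `π(T) = T_d T_{d-1} ⋯ T_1` of the distinguished tableau of
shape `Z(d,r)`. -/
def piWord (d r : ℕ) : List ℕ :=
  (List.range d).flatMap fun k => rowWord d r (d - k)

/-- `μ_i = Z(d,r)_i - λ_i`. -/
def muF (d r : ℕ) (lam : ℕ → ℕ) (i : ℕ) : ℕ := r + 2 * d + 1 - 2 * i - lam i

/-- `σ_i = μ_1 + ⋯ + μ_i`. -/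
def sigmaF (d r : ℕ) (lam : ℕ → ℕ) (i : ℕ) : ℕ := ∑ t ∈ Finset.Icc 1 i, muF d r lam t

/-- `ν_i = min{μ_i, …, μ_d}`. -/
noncomputable def nuF (d r : ℕ) (lam : ℕ → ℕ) (i : ℕ) : ℕ :=
  sInf {m : ℕ | ∃ j : ℕ, i ≤ j ∧ j ≤ d ∧ m = muF d r lam j}

/-- The word `a^λ`: the concatenation over `i = 1, …, d` of the increasing runs
`(d+r-i-μ_i+1, …, d+r-i)`. -/
def aLamWord (d r : ℕ) (lam : ℕ → ℕ) : List ℕ :=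
  (List.range d).flatMap fun k =>
    (List.range (muF d r lam (k + 1))).map fun t =>
      d + r - (k + 1) - muF d r lam (k + 1) + 1 + t

/-- Row `i` of the tableau `P(w^λ)`: entries `P(i,c) = c` for `c ≥ 0` and
`P(i,c) = r - c - ν_{d+1+c}` for `c < 0`. -/
noncomputable def rowWordP (d r : ℕ) (lam : ℕ → ℕ) (i : ℕ) : List ℕ :=
  (List.range (lam i)).map fun t =>
    if t < d - i then r + (d - i) - t - nuF d r lam (i + 1 + t) else t - (d - i)

/-- The reading word `π(P(w^λ))`. -/
noncomputable def piWordP (d r : ℕ) (lam : ℕ → ℕ) : List ℕ :=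
  (List.range d).flatMap fun k => rowWordP d r lam (d - k)

/-- The shape obtained from `λ` by adding one box at the end of row `i`. -/
def stepShape (lam : ℕ → ℕ) (i : ℕ) : ℕ → ℕ :=
  fun t => if t = i then lam i + 1 else lam t

/-- The box-adding map `f_i` on fillings: swap columns `j = λ_i + i - d` and `j + 1`
(in rows `1, …, i-1`), and put the value `N + 1` in the new box `(i, j)`. -/
def addBox (d : ℕ) (lam : ℕ → ℕ) (i : ℕ) (N : ℕ) (B : ℤ × ℤ → ℕ) : ℤ × ℤ → ℕ :=
  fun p =>
    if p = ((i : ℤ), (lam i : ℤ) + (i : ℤ) - (d : ℤ)) then N + 1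
    else if 1 ≤ p.1 ∧ p.1 < (i : ℤ) ∧ p.2 = (lam i : ℤ) + (i : ℤ) - (d : ℤ) then
      B (p.1, p.2 + 1)
    else if 1 ≤ p.1 ∧ p.1 < (i : ℤ) ∧ p.2 = (lam i : ℤ) + (i : ℤ) - (d : ℤ) + 1 then
      B (p.1, p.2 - 1)
    else B p

/-- Successively apply the box-adding maps along a list of row indices,
tracking the current shape. -/
def FmapAux (d : ℕ) : List ℕ → (ℕ → ℕ) → (ℤ × ℤ → ℕ) → (ℤ × ℤ → ℕ)
  | [], _, B => B
  | i :: rest, lam, B => FmapAux d rest (stepShape lam i) (addBox d lam i (sizeP d lam) B)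

/-- The shape after successively adding boxes along a list of row indices. -/
def shapeAux : List ℕ → (ℕ → ℕ) → (ℕ → ℕ)
  | [], lam => lam
  | i :: rest, lam => shapeAux rest (stepShape lam i)

/-- The list of row indices `1^{μ_1} 2^{μ_2} ⋯ d^{μ_d}` used to pad `λ` to `Z(d,r)`. -/
def rowsList (d r : ℕ) (lam : ℕ → ℕ) : List ℕ :=
  (List.range d).flatMap fun k => List.replicate (muF d r lam (k + 1)) (k + 1)

/-- `BS(Z(d,r))|_λ`: balanced tableaux of shape `Z(d,r)` such that for each
`i ∈ {1,…,d}` the entries `N + σ_{i-1} + 1, …, N + σ_i` all occur in row `i`. -/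
def BSRestricted (d r : ℕ) (lam : ℕ → ℕ) : Set (ℤ × ℤ → ℕ) :=
  {T | IsBalanced d (Zlam d r) T ∧ ∀ i : ℕ, 1 ≤ i → i ≤ d →
    ∀ k : ℕ, sizeP d lam + sigmaF d r lam (i - 1) + 1 ≤ k →
      k ≤ sizeP d lam + sigmaF d r lam i →
      ∃ c : ℤ, ((i : ℤ), c) ∈ Diagram d (Zlam d r) ∧ T ((i : ℤ), c) = k}

/-- `w ∈ W(B_n)` pattern embeds the signed pattern `v` (given as its one-line
notation, a list of nonzero integers). -/
def PatternEmbeds (n : ℕ) (w : Equiv.Perm ℤ) (v : List ℤ) : Prop :=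
  ∃ idx : Fin v.length → ℤ, StrictMono idx ∧
    (∀ j, 1 ≤ idx j ∧ idx j ≤ (n : ℤ)) ∧
    (∀ j, 0 < w (idx j) ↔ 0 < v.get j) ∧
    (∀ j k, |w (idx j)| < |w (idx k)| ↔ |v.get j| < |v.get k|)


theorem sB_zero_apply (x : ℤ) : sB 0 x = if x = 1 then -1 else if x = -1 then 1 else x := by
  simp [sB, Equiv.swap_apply_def]

theorem sB_pos_apply (a : ℕ) (ha : a ≠ 0) (x : ℤ) : sB a x =
    if x = a then (a:ℤ)+1 else if x = a + 1 then (a:ℤ) else if x = -a then -(a:ℤ)-1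
    else if x = -(a:ℤ)-1 then -(a:ℤ) else x := by
  simp only [sB, ha, if_false, Equiv.Perm.mul_apply, Equiv.swap_apply_def]
  split_ifs <;> omega

theorem sB_odd (a : ℕ) (x : ℤ) : sB a (-x) = - sB a x := by
  rcases Nat.eq_zero_or_pos a with rfl | h
  · simp only [sB_zero_apply]; split_ifs <;> omega
  · simp only [sB_pos_apply a h.ne']; split_ifs <;> omega

theorem wordProd_cons (a : ℕ) (L : List ℕ) (x : ℤ) :
    wordProd (a :: L) x = sB a (wordProd L x) := by
  simp [wordProd]

theorem wordProd_append (L M : List ℕ) : wordProd (L ++ M) = wordProd L * wordProd M := by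
  simp [wordProd]

theorem wordProd_odd (L : List ℕ) (x : ℤ) : wordProd L (-x) = - wordProd L x := by
  induction L with
  | nil => simp [wordProd]
  | cons a L ih => rw [wordProd_cons, wordProd_cons, ih, sB_odd]

theorem asc_apply (m : ℕ) (t : ℤ) (ht : 1 ≤ t) : wordProd (List.range (m+1)) t =
    if t ≤ m then t + 1 else if t = m + 1 then -1 else t := by
  induction m generalizing t with
  | zero =>
    simp [wordProd, sB_zero_apply]
    split_ifs <;> omega
  | succ m ih =>
    rw [List.range_succ, wordProd_append, Equiv.Perm.mul_apply]
    have e : wordProd [m+1] t = sB (m+1) t := by simp [wordProd]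
    rw [e, sB_pos_apply _ (by omega), ih _ (by split_ifs <;> push_cast at * <;> omega)]
    push_cast
    split_ifs <;> omega

theorem desc_apply (r k : ℕ) (t : ℤ) :
    wordProd ((List.range k).map fun t => r + k - t) t =
    if t = r + 1 then (r:ℤ) + k + 1 else if r + 2 ≤ t ∧ t ≤ r + k + 1 then t - 1 else
    if t = -(r + 1) then -((r:ℤ) + k + 1)
    else if r + 2 ≤ -t ∧ -t ≤ r + k + 1 then t + 1 else t := by
  induction k with
  | zero => simp [wordProd]; split_ifs <;> omega
  | succ k ih =>
    have e : ((List.range (k+1)).map fun t => r + (k+1) - t) =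
        (r + k + 1) :: ((List.range k).map fun t => r + k - t) := by
      rw [List.range_succ_eq_map]
      simp only [List.map_cons, List.map_map]
      congr 1
      apply List.map_congr_left
      intro a _
      simp only [Function.comp]; omega
    rw [e, wordProd_cons, ih, sB_pos_apply _ (by omega)]
    push_cast
    split_ifs <;> omega

theorem rowWord_eq (d r k : ℕ) (hk : k ≤ d) : rowWord d r (d - k) =
    ((List.range k).map fun t => r + k - t) ++ List.range (r + k + 1) := by
  unfold rowWord
  have : d - (d - k) = k := by omega
  rw [this, show r + 2 * k + 1 = k + (r + k + 1) by ring, List.range_add, List.map_append]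
  congr 1
  · apply List.map_congr_left
    intro a ha
    rw [if_pos (List.mem_range.1 ha)]
  · rw [List.map_map]
    conv_rhs => rw [← List.map_id (List.range (r+k+1))]
    apply List.map_congr_left
    intro a _
    simp

theorem row_apply (d r k : ℕ) (hk : k ≤ d) (t : ℤ) (ht : 1 ≤ t) :
    (t < r ∧ wordProd (rowWord d r (d - k)) t = t + 1) ∨
    (t = r ∧ wordProd (rowWord d r (d - k)) t = r + k + 1) ∨
    (r < t ∧ t ≠ r + k + 1 ∧ wordProd (rowWord d r (d - k)) t = t) ∨
    (t = r + k + 1 ∧ r = 0 ∧ wordProd (rowWord d r (d - k)) t = -((k:ℤ) + 1)) ∨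
    (t = r + k + 1 ∧ 0 < r ∧ wordProd (rowWord d r (d - k)) t = -1) := by
  rw [rowWord_eq d r k hk, wordProd_append, Equiv.Perm.mul_apply, asc_apply _ _ ht]
  push_cast
  rcases lt_trichotomy t ((r:ℤ) + k + 1) with h | h | h
  · rw [if_pos (by omega), desc_apply]
    split_ifs <;> omega
  · rw [if_neg (by omega), if_pos h, desc_apply]
    split_ifs <;> omega
  · rw [if_neg (by omega), if_neg (by omega), desc_apply]
    split_ifs <;> omega

theorem rows_apply (d r k : ℕ) (hk : k ≤ d) (t : ℤ) (ht : 1 ≤ t) :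
    wordProd ((List.range k).flatMap fun k => rowWord d r (d - k)) t =
    if t ≤ r then k + t else if t ≤ r + k then -(t - r) else t := by
  induction k generalizing t with
  | zero => simp [wordProd]; omega
  | succ k ih =>
    have ih := ih (by omega)
    rw [List.range_succ, List.flatMap_append, wordProd_append, Equiv.Perm.mul_apply]
    simp only [List.flatMap_cons, List.flatMap_nil, List.append_nil]
    have hodd := wordProd_odd ((List.range k).flatMap fun k => rowWord d r (d - k))
    push_cast
    rcases row_apply d r k (by omega) t ht with ⟨h, e⟩ | ⟨h, e⟩ | ⟨h, h', e⟩ | ⟨h, h', e⟩ | ⟨h, h', e⟩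
    · rw [e, ih _ (by omega)]; split_ifs <;> omega
    · rw [e, ih _ (by omega)]; split_ifs <;> omega
    · rw [e, ih _ (by omega)]; split_ifs <;> omega
    · rw [e, hodd, ih _ (by omega)]; split_ifs <;> omega
    · rw [e, hodd, ih _ (by omega)]; split_ifs <;> omega

theorem rows_length (d r k : ℕ) (hk : k ≤ d) :
    ((List.range k).flatMap fun k => rowWord d r (d - k)).length = k * (k + r) := by
  induction k with
  | zero => simp
  | succ k ih =>
    rw [List.range_succ, List.flatMap_append, List.length_append, ih (by omega)]
    simp only [List.flatMap_cons, List.flatMap_nil, List.append_nil]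
    rw [rowWord_eq d r k (by omega)]
    simp
    ring

/-- signed inversions -/
noncomputable def invF (n : ℕ) (w : Equiv.Perm ℤ) : Finset (ℤ × ℤ) :=
  (Finset.Icc (-(n:ℤ)) n ×ˢ Finset.Icc (-(n:ℤ)) n).filter
    fun p => p.1 ≠ 0 ∧ p.2 ≠ 0 ∧ p.1 < p.2 ∧ w p.2 < w p.1

/-- negative positions -/
noncomputable def negF (n : ℕ) (w : Equiv.Perm ℤ) : Finset ℤ :=
  (Finset.Icc 1 (n:ℤ)).filter fun y => w y < 0

theorem pot_step (n : ℕ) (w : Equiv.Perm ℤ) (a : ℕ) (ha : a < n) :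
    (invF n (w * sB a)).card + (negF n (w * sB a)).card ≤
      (invF n w).card + (negF n w).card + 2 := by
  have inj : Function.Injective (fun p : ℤ × ℤ => (sB a p.1, sB a p.2)) := by
    rintro ⟨x, y⟩ ⟨x', y'⟩ h
    simpa using h
  rcases Nat.eq_zero_or_pos a with rfl | h
  · have h1 : (invF n (w * sB 0)).card ≤ (invF n w).card + 1 := by
      rw [← Finset.card_image_of_injective _ inj]
      refine (Finset.card_le_card (t := insert (1, -1) (invF n w)) ?_).trans
        (Finset.card_insert_le _ _)
      intro q hq
      obtain ⟨⟨x, y⟩, hp, rfl⟩ := Finset.mem_image.1 hq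
      simp only [invF, Finset.mem_insert, Finset.mem_filter, Finset.mem_product, Finset.mem_Icc,
        Prod.mk.injEq] at hp ⊢
      simp only [Equiv.Perm.mul_apply] at hp
      obtain ⟨hb, hx, hy, hxy, hw⟩ := hp
      by_cases hc : x = -1 ∧ y = 1
      · left; simp [hc.1, hc.2, sB_zero_apply]
      · right
        refine ⟨?_, ?_, ?_, ?_, hw⟩ <;> simp only [sB_zero_apply] <;> split_ifs <;> omega
    have h2 : (negF n (w * sB 0)).card ≤ (negF n w).card + 1 := by
      refine (Finset.card_le_card (t := insert 1 (negF n w)) ?_).trans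
        (Finset.card_insert_le _ _)
      intro y hy
      simp only [negF, Finset.mem_insert, Finset.mem_filter, Finset.mem_Icc] at hy ⊢
      simp only [Equiv.Perm.mul_apply, sB_zero_apply] at hy
      by_cases hc : y = 1
      · left; exact hc
      · rw [if_neg hc, if_neg (by omega)] at hy
        right; exact hy
    omega
  · have h1 : (invF n (w * sB a)).card ≤ (invF n w).card + 2 := by
      rw [← Finset.card_image_of_injective _ inj]
      refine (Finset.card_le_card
        (t := insert ((a:ℤ)+1, (a:ℤ)) (insert (-(a:ℤ), -(a:ℤ)-1) (invF n w))) ?_).trans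
        ((Finset.card_insert_le _ _).trans (Nat.succ_le_succ (Finset.card_insert_le _ _)))
      intro q hq
      obtain ⟨⟨x, y⟩, hp, rfl⟩ := Finset.mem_image.1 hq
      simp only [invF, Finset.mem_insert, Finset.mem_filter, Finset.mem_product, Finset.mem_Icc,
        Prod.mk.injEq] at hp ⊢
      simp only [Equiv.Perm.mul_apply] at hp
      obtain ⟨hb, hx, hy, hxy, hw⟩ := hp
      by_cases hc : x = a ∧ y = a + 1
      · left
        simp only [sB_pos_apply a h.ne']
        constructor <;> split_ifs <;> omega
      by_cases hc' : x = -(a:ℤ) - 1 ∧ y = -(a:ℤ)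
      · right; left
        simp only [sB_pos_apply a h.ne']
        constructor <;> split_ifs <;> omega
      right; right
      refine ⟨?_, ?_, ?_, ?_, hw⟩ <;> simp only [sB_pos_apply a h.ne'] <;> split_ifs <;> omega
    have h2 : (negF n (w * sB a)).card ≤ (negF n w).card := by
      rw [← Finset.card_image_of_injective _ (sB a).injective]
      apply Finset.card_le_card
      intro q hq
      obtain ⟨y, hp, rfl⟩ := Finset.mem_image.1 hq
      simp only [negF, Finset.mem_filter, Finset.mem_Icc] at hp ⊢
      simp only [Equiv.Perm.mul_apply] at hp
      refine ⟨?_, hp.2⟩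
      simp only [sB_pos_apply a h.ne']
      split_ifs <;> omega
    omega

theorem pot_le (n : ℕ) (L : List ℕ) (hL : ∀ a ∈ L, a < n) :
    (invF n (wordProd L)).card + (negF n (wordProd L)).card ≤ 2 * L.length := by
  induction L using List.reverseRecOn with
  | nil =>
    have h1 : invF n (wordProd []) = ∅ := by
      apply Finset.filter_eq_empty_iff.2
      intro p _ h
      simp [wordProd] at h
      omega
    have h2 : negF n (wordProd []) = ∅ := by
      apply Finset.filter_eq_empty_iff.2
      intro p hp h
      simp [wordProd] at h hp
      omega
    simp [h1, h2]
  | append_singleton L a ih =>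
    have := ih (fun b hb => hL b (by simp [hb]))
    have e : wordProd [a] = sB a := by simp [wordProd]
    have h2 := pot_step n (wordProd L) a (hL a (by simp))
    rw [wordProd_append, e, List.length_append]
    simp only [List.length_singleton]
    omega

theorem pot_lower (d r i : ℕ) (hid : i ≤ d)
    (u : Equiv.Perm ℤ) (hodd : ∀ x, u (-x) = - u x)
    (hu1 : ∀ t : ℤ, 1 ≤ t → t ≤ (r : ℤ) → u t = (i : ℤ) + t)
    (hu2 : ∀ t : ℤ, (r : ℤ) < t → t ≤ (r : ℤ) + (i : ℤ) → u t = -(t - r)) :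
    2 * (i * (i + r)) ≤ (invF (d+r) u).card + (negF (d+r) u).card := by
  have hn1 : ∀ t : ℤ, -(r:ℤ) ≤ t → t ≤ -1 → u t = t - i := by
    intro t h1 h2
    have := hodd (-t)
    rw [neg_neg, hu1 (-t) (by omega) (by omega)] at this
    omega
  have hn2 : ∀ t : ℤ, -((r:ℤ)+i) ≤ t → t < -(r:ℤ) → u t = - t - r := by
    intro t h1 h2
    have := hodd (-t)
    rw [neg_neg, hu2 (-t) (by omega) (by omega)] at this
    omega
  have hneg : i ≤ (negF (d+r) u).card := by
    have : Finset.Icc ((r:ℤ)+1) (r+i) ⊆ negF (d+r) u := by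
      intro y hy
      simp only [negF, Finset.mem_filter, Finset.mem_Icc] at hy ⊢
      rw [hu2 y (by omega) (by omega)]
      push_cast
      omega
    have h := Finset.card_le_card this
    simp only [Int.card_Icc] at h
    omega
  set g : ℤ × ℤ → ℤ × ℤ := fun p =>
    if p.1 < p.2 then (r + p.1, r + p.2) else (-(r + p.1), -(r + p.2)) with hg
  set A := Finset.Icc (1:ℤ) r ×ˢ Finset.Icc ((r:ℤ)+1) (r+i) with hA
  set A' := Finset.Icc (-((r:ℤ)+i)) (-((r:ℤ)+1)) ×ˢ Finset.Icc (-(r:ℤ)) (-1) with hA'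
  set C := Finset.Icc (-((r:ℤ)+i)) (-((r:ℤ)+1)) ×ˢ Finset.Icc ((r:ℤ)+1) (r+i) with hC
  set B := (Finset.Icc (1:ℤ) i).offDiag.image g with hB
  have cA : A.card = r * i := by
    simp [hA, Int.card_Icc]
  have cA' : A'.card = i * r := by
    simp [hA', Int.card_Icc]
  have cC : C.card = i * i := by
    simp [hC, Int.card_Icc]
  have cB : B.card = i * i - i := by
    rw [hB, Finset.card_image_of_injOn, Finset.offDiag_card]
    · simp [Int.card_Icc]
    · rintro ⟨x, y⟩ h ⟨x', y'⟩ h' he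
      simp only [Finset.coe_offDiag, Set.mem_offDiag, Finset.coe_Icc, Set.mem_Icc] at h h'
      simp only [hg] at he
      split_ifs at he <;> simp only [Prod.mk.injEq] at he ⊢ <;> omega
  have mB : ∀ p ∈ B, (r + 1 ≤ p.1 ∧ p.1 < p.2 ∧ p.2 ≤ r + i) ∨
      (-((r:ℤ) + i) ≤ p.1 ∧ p.1 < p.2 ∧ p.2 ≤ -((r:ℤ)+1)) := by
    intro p hp
    obtain ⟨⟨x, y⟩, h, rfl⟩ := Finset.mem_image.1 hp
    simp only [Finset.mem_offDiag, Finset.mem_Icc] at h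
    simp only [hg]
    split_ifs <;> simp only <;> omega
  have d1 : Disjoint A A' := by
    rw [Finset.disjoint_left]; intro p h h'
    simp only [hA, hA', Finset.mem_product, Finset.mem_Icc] at h h'
    omega
  have d2 : Disjoint (A ∪ A') C := by
    rw [Finset.disjoint_left]; intro p h h'
    simp only [hA, hA', hC, Finset.mem_union, Finset.mem_product, Finset.mem_Icc] at h h'
    omega
  have d3 : Disjoint (A ∪ A' ∪ C) B := by
    rw [Finset.disjoint_left]; intro p h h'
    have := mB p h'
    simp only [hA, hA', hC, Finset.mem_union, Finset.mem_product, Finset.mem_Icc] at h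
    omega
  have sub : A ∪ A' ∪ C ∪ B ⊆ invF (d+r) u := by
    rintro ⟨x, y⟩ hp
    simp only [invF, Finset.mem_filter, Finset.mem_product, Finset.mem_Icc]
    push_cast
    rcases Finset.mem_union.1 hp with h | h
    · simp only [hA, hA', hC, Finset.mem_union, Finset.mem_product, Finset.mem_Icc] at h
      rcases h with (h | h) | h
      · rw [hu1 x (by omega) (by omega), hu2 y (by omega) (by omega)]; omega
      · rw [hn2 x (by omega) (by omega), hn1 y (by omega) (by omega)]; omega
      · rw [hn2 x (by omega) (by omega), hu2 y (by omega) (by omega)]; omega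
    · rcases mB _ h with h | h
      · simp only at h
        rw [hu2 x (by omega) (by omega), hu2 y (by omega) (by omega)]; omega
      · simp only at h
        rw [hn2 x (by omega) (by omega), hn2 y (by omega) (by omega)]; omega
  have hc := Finset.card_le_card sub
  rw [Finset.card_union_of_disjoint d3, Finset.card_union_of_disjoint d2,
    Finset.card_union_of_disjoint d1, cA, cA', cC, cB] at hc
  have : i ≤ i * i := Nat.le_mul_self i
  have e : 2 * (i * (i + r)) = r * i + i * r + i * i + i * i := by ring
  omega

/-- the concatenation of the bottom `i` rows of the distinguished
tableau of shape `Z(d,r)` is a reduced word of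
`u^{(i)} = (i+1, …, r+i, -1, …, -i, r+i+1, …, r+d)`. -/
theorem bottom_rows_reduced (d r : ℕ) (hd : 1 ≤ d)
    (i : ℕ) (hi1 : 1 ≤ i) (hid : i ≤ d)
    (u : Equiv.Perm ℤ) (hu : IsSignedPerm (d + r) u)
    (hu1 : ∀ t : ℤ, 1 ≤ t → t ≤ (r : ℤ) → u t = (i : ℤ) + t)
    (hu2 : ∀ t : ℤ, (r : ℤ) < t → t ≤ (r : ℤ) + (i : ℤ) → u t = -(t - r))
    (hu3 : ∀ t : ℤ, (r : ℤ) + (i : ℤ) < t → t ≤ (r : ℤ) + (d : ℤ) → u t = t) :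
    IsReducedWord (d + r) u
      ((List.range i).flatMap fun k => rowWord d r (d - k)) := by
  have hmem : ∀ a ∈ ((List.range i).flatMap fun k => rowWord d r (d - k)), a < d + r := by
    intro a ha
    obtain ⟨k, hk, h⟩ := List.mem_flatMap.1 ha
    have hk := List.mem_range.1 hk
    rw [rowWord_eq d r k (by omega)] at h
    simp only [List.mem_append, List.mem_map, List.mem_range] at h
    omega
  have hprod : wordProd ((List.range i).flatMap fun k => rowWord d r (d - k)) = u := by
    have hpos : ∀ t : ℤ, 1 ≤ t →
        wordProd ((List.range i).flatMap fun k => rowWord d r (d - k)) t = u t := by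
      intro t ht
      rw [rows_apply d r i hid t ht]
      split_ifs with h1 h2
      · rw [hu1 t ht h1]
      · rw [hu2 t (by omega) h2]
      · by_cases h3 : t ≤ r + d
        · rw [hu3 t (by omega) h3]
        · rw [hu.2 t (by rw [abs_of_pos (by omega)]; push_cast; omega)]
    ext t
    rcases lt_trichotomy t 0 with h | h | h
    · have e1 := wordProd_odd ((List.range i).flatMap fun k => rowWord d r (d - k)) (-t)
      have e2 := hu.1 (-t)
      rw [neg_neg] at e1 e2
      rw [e1, e2, hpos _ (by omega)]
    · subst h
      have e1 := wordProd_odd ((List.range i).flatMap fun k => rowWord d r (d - k)) 0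
      have e2 := hu.1 0
      rw [neg_zero] at e1 e2
      omega
    · exact hpos t h
  refine ⟨hmem, hprod, ?_⟩
  apply le_antisymm
  · unfold lengthB
    refine le_csInf ⟨_, ⟨_, hmem, hprod, rfl⟩⟩ ?_
    rintro m ⟨L, hL, hw, rfl⟩
    have h1 := pot_le (d+r) L hL
    have h2 := pot_lower d r i hid u hu.1 hu1 hu2
    rw [hw] at h1
    rw [rows_length d r i hid]
    omega
  · exact Nat.sInf_le ⟨_, hmem, hprod, rfl⟩

end BST
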